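/- Let A ∈ 𝔰𝔭(ℝ⁶) with A ≠ 0 and set c := −½( tr(S_A²) + ½(tr JA)² + ( |[A,Aᵗ]|² + ⟨S_A ∘₆ S_A, [A,Aᵗ]⟩ )/|A|² ). Then c ≤ 0, and if c = 0 then A is skew-symmetric (Aᵗ = −A), tr(JA) = 0 and [J, A] = 0 (i.e. the full torsion tensor of the associated coclosed G₂-structure vanishes). Hence every (semi-)algebraic soliton of the Laplacian coflow on an almost Abelian Lie group is expanding, and it is steady only if it is torsion-free. -/

import Mathlib

open Matrix BigOperators

noncomputable section

abbrev M6 : Type := Matrix (Fin 6) (Fin 6) ℝ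
abbrev M7 : Type := Matrix (Fin 7) (Fin 7) ℝ

/-- The canonical almost complex structure `J` on `ℝ⁶`:
`Je₁ = e₂, Je₂ = −e₁, Je₃ = e₄, Je₄ = −e₃, Je₅ = e₆, Je₆ = −e₅` (0-based indices). -/
def J6 : M6 := Matrix.of fun i j =>
  if (i = 1 ∧ j = 0) ∨ (i = 3 ∧ j = 2) ∨ (i = 5 ∧ j = 4) then 1
  else if (i = 0 ∧ j = 1) ∨ (i = 2 ∧ j = 3) ∨ (i = 4 ∧ j = 5) then -1
  else 0

/-- `A ∈ 𝔰𝔭(ℝ⁶)` iff `AJ + JAᵗ = 0`. -/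
def inSp (A : M6) : Prop := A * J6 + J6 * Aᵀ = 0

/-- The symmetric part `S_A = ½(A + Aᵗ)`. -/
def symPart (A : M6) : M6 := (1/2 : ℝ) • (A + Aᵀ)

/-- Frobenius inner product `⟨X,Y⟩ = tr(XYᵗ)`. -/
def mdot {n : ℕ} (X Y : Matrix (Fin n) (Fin n) ℝ) : ℝ := (X * Yᵀ).trace

/-- Commutator `[X,Y] = XY − YX`. -/
def mcomm {n : ℕ} (X Y : Matrix (Fin n) (Fin n) ℝ) : Matrix (Fin n) (Fin n) ℝ := X * Y - Y * X

/-- Kronecker delta. -/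
def kdelta {n : ℕ} (x y : Fin n) : ℝ := if x = y then 1 else 0

/-- The totally antisymmetric 3-tensor `e^a ∧ e^b ∧ e^c` evaluated on `(e_i, e_j, e_k)`. -/
def alt3 {n : ℕ} (a b c i j k : Fin n) : ℝ :=
  Matrix.det !![kdelta a i, kdelta a j, kdelta a k;
                kdelta b i, kdelta b j, kdelta b k;
                kdelta c i, kdelta c j, kdelta c k]

/-- `ρ⁺ = e¹³⁵ − e¹⁴⁶ − e²⁴⁵ − e²³⁶` (here written with 0-based indices). -/
def rhoP (i j k : Fin 6) : ℝ :=
  alt3 0 2 4 i j k - alt3 0 3 5 i j k - alt3 1 3 4 i j k - alt3 1 2 5 i j k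

/-- `(h ∘₆ k)_{ab} = Σ_{m,n,p,q} h_{mn} k_{pq} ρ⁺_{mpa} ρ⁺_{nqb}`. -/
def circ6 (h k : M6) : M6 :=
  Matrix.of fun a b => ∑ m, ∑ n, ∑ p, ∑ q, h m n * k p q * rhoP m p a * rhoP n q b

/-- Embed a 6×6 block and a scalar as a block-diagonal 7×7 matrix `diag(M, x)`. -/
def blockDiag7 (M : M6) (x : ℝ) : M7 :=
  Matrix.of fun i j =>
    if hi : (i : ℕ) < 6 then
      (if hj : (j : ℕ) < 6 then M ⟨i, hi⟩ ⟨j, hj⟩ else 0)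
    else (if (j : ℕ) < 6 then 0 else x)

/-- The Lie bracket of the almost Abelian Lie algebra `𝔤_A = ℝ⁶ ⊕ ℝe₇`:
`[e₇, v] = Av` for `v ∈ ℝ⁶` and `[v, w] = 0` for `v, w ∈ ℝ⁶`. -/
def bracket7 (A : M6) (x y : Fin 7 → ℝ) : Fin 7 → ℝ :=
  x 6 • (blockDiag7 A 0).mulVec y - y 6 • (blockDiag7 A 0).mulVec x

/-- `D ∈ gl(ℝ⁷)` is a derivation of `𝔤_A`. -/
def IsDerivation7 (A : M6) (D : M7) : Prop :=
  ∀ x y : Fin 7 → ℝ,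
    D.mulVec (bracket7 A x y) = bracket7 A (D.mulVec x) y + bracket7 A x (D.mulVec y)

/-- `Q_A = diag(½[A,Aᵗ] + ½ S_A ∘₆ S_A , −½tr(S_A²) − ¼(tr JA)²)`, the matrix with
`Δ_A ψ = θ(Q_A)ψ`. -/
def QA (A : M6) : M7 :=
  blockDiag7 ((1/2 : ℝ) • mcomm A Aᵀ + (1/2 : ℝ) • circ6 (symPart A) (symPart A))
    (-(1/2) * (symPart A * symPart A).trace - (1/4) * ((J6 * A).trace)^2)


def mkS (a11 a12 a13 a22 a23 a33 b11 b12 b13 b22 b23 b33 : ℝ) : M6 :=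
  !![a11, b11, a12, b12, a13, b13;
    b11, -a11, b12, -a12, b13, -a13;
    a12, b12, a22, b22, a23, b23;
    b12, -a12, b22, -a22, b23, -a23;
    a13, b13, a23, b23, a33, b33;
    b13, -a13, b23, -a23, b33, -a33]

def mkA (a11 a12 a13 a22 a23 a33 b11 b12 b13 b22 b23 b33 p12 p13 p23 q11 q12 q13 q22 q23 q33 : ℝ) : M6 :=
  !![a11, b11 - q11, a12 + p12, b12 - q12, a13 + p13, b13 - q13;
    b11 + q11, -a11, b12 + q12, -a12 + p12, b13 + q13, -a13 + p13;
    a12 - p12, b12 - q12, a22, b22 - q22, a23 + p23, b23 - q23;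
    b12 + q12, -a12 - p12, b22 + q22, -a22, b23 + q23, -a23 + p23;
    a13 - p13, b13 - q13, a23 - p23, b23 - q23, a33, b33 - q33;
    b13 + q13, -a13 - p13, b23 + q23, -a23 - p23, b33 + q33, -a33]

lemma rho_sum0 (f : Fin 6 → Fin 6 → ℝ) :
    ∑ m, ∑ n, f m n * rhoP m n 0 = 0 + f 2 4 - f 3 5 - f 4 2 + f 5 3 := by
  simp [Fin.sum_univ_six, rhoP, alt3, kdelta, Matrix.det_fin_three]
  try ring

lemma rho_sum1 (f : Fin 6 → Fin 6 → ℝ) :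
    ∑ m, ∑ n, f m n * rhoP m n 1 = 0 - f 2 5 - f 3 4 + f 4 3 + f 5 2 := by
  simp [Fin.sum_univ_six, rhoP, alt3, kdelta, Matrix.det_fin_three]
  try ring

lemma rho_sum2 (f : Fin 6 → Fin 6 → ℝ) :
    ∑ m, ∑ n, f m n * rhoP m n 2 = 0 - f 0 4 + f 1 5 + f 4 0 - f 5 1 := by
  simp [Fin.sum_univ_six, rhoP, alt3, kdelta, Matrix.det_fin_three]
  try ring

lemma rho_sum3 (f : Fin 6 → Fin 6 → ℝ) :
    ∑ m, ∑ n, f m n * rhoP m n 3 = 0 + f 0 5 + f 1 4 - f 4 1 - f 5 0 := by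
  simp [Fin.sum_univ_six, rhoP, alt3, kdelta, Matrix.det_fin_three]
  try ring

lemma rho_sum4 (f : Fin 6 → Fin 6 → ℝ) :
    ∑ m, ∑ n, f m n * rhoP m n 4 = 0 + f 0 2 - f 1 3 - f 2 0 + f 3 1 := by
  simp [Fin.sum_univ_six, rhoP, alt3, kdelta, Matrix.det_fin_three]
  try ring

lemma rho_sum5 (f : Fin 6 → Fin 6 → ℝ) :
    ∑ m, ∑ n, f m n * rhoP m n 5 = 0 - f 0 3 - f 1 2 + f 2 1 + f 3 0 := by
  simp [Fin.sum_univ_six, rhoP, alt3, kdelta, Matrix.det_fin_three]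
  try ring

lemma circ6_eq (h k : M6) (a b : Fin 6) :
    circ6 h k a b = ∑ m, ∑ p, (∑ n, ∑ q, (h m n * k p q) * rhoP n q b) * rhoP m p a := by
  simp only [circ6, Matrix.of_apply, Finset.sum_mul]
  refine Finset.sum_congr rfl fun m _ => ?_
  rw [Finset.sum_comm]
  refine Finset.sum_congr rfl fun p _ => ?_
  refine Finset.sum_congr rfl fun n _ => ?_
  refine Finset.sum_congr rfl fun q _ => ?_
  ring

lemma exists_mk (A : M6) (hA : inSp A) : ∃ a11 a12 a13 a22 a23 a33 b11 b12 b13 b22 b23 b33 p12 p13 p23 q11 q12 q13 q22 q23 q33 : ℝ, A = mkA a11 a12 a13 a22 a23 a33 b11 b12 b13 b22 b23 b33 p12 p13 p23 q11 q12 q13 q22 q23 q33 := by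
  refine ⟨(A 0 0 - A 1 1)/2, (A 0 2 - A 1 3)/2, (A 0 4 - A 1 5)/2, (A 2 2 - A 3 3)/2, (A 2 4 - A 3 5)/2, (A 4 4 - A 5 5)/2, (A 0 1 + A 1 0)/2, (A 0 3 + A 1 2)/2, (A 0 5 + A 1 4)/2, (A 2 3 + A 3 2)/2, (A 2 5 + A 3 4)/2, (A 4 5 + A 5 4)/2, (A 0 2 + A 1 3)/2, (A 0 4 + A 1 5)/2, (A 2 4 + A 3 5)/2, (A 1 0 - A 0 1)/2, (A 1 2 - A 0 3)/2, (A 1 4 - A 0 5)/2, (A 3 2 - A 2 3)/2, (A 3 4 - A 2 5)/2, (A 5 4 - A 4 5)/2, ?_⟩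
  have h : ∀ i j, (A * J6 + J6 * Aᵀ) i j = 0 := fun i j => by rw [hA]; rfl
  simp [Matrix.mul_apply, Fin.sum_univ_six, J6, Fin.forall_fin_succ] at h
  ext i j
  fin_cases i <;> fin_cases j <;> simp [mkA] <;> linarith

lemma symPart_mk (a11 a12 a13 a22 a23 a33 b11 b12 b13 b22 b23 b33 p12 p13 p23 q11 q12 q13 q22 q23 q33 : ℝ) : symPart (mkA a11 a12 a13 a22 a23 a33 b11 b12 b13 b22 b23 b33 p12 p13 p23 q11 q12 q13 q22 q23 q33) = mkS a11 a12 a13 a22 a23 a33 b11 b12 b13 b22 b23 b33 := by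
  ext i j
  fin_cases i <;> fin_cases j <;> simp [mkA, mkS, symPart] <;> ring


def mkC (a11 a12 a13 a22 a23 a33 b11 b12 b13 b22 b23 b33 : ℝ) : M6 :=
  !![4*((a22*a33 - b22*b33) - (a23*a23 - b23*b23)), -4*((a22*b33 + b22*a33) - (a23*b23 + b23*a23)), 4*((a23*a13 - b23*b13) - (a33*a12 - b33*b12)), -4*((a23*b13 + b23*a13) - (a33*b12 + b33*a12)), 4*((a12*a23 - b12*b23) - (a13*a22 - b13*b22)), -4*((a12*b23 + b12*a23) - (a13*b22 + b13*a22));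
    -4*((a22*b33 + b22*a33) - (a23*b23 + b23*a23)), -4*((a22*a33 - b22*b33) - (a23*a23 - b23*b23)), -4*((a23*b13 + b23*a13) - (a33*b12 + b33*a12)), -4*((a23*a13 - b23*b13) - (a33*a12 - b33*b12)), -4*((a12*b23 + b12*a23) - (a13*b22 + b13*a22)), -4*((a12*a23 - b12*b23) - (a13*a22 - b13*b22));
    4*((a23*a13 - b23*b13) - (a12*a33 - b12*b33)), -4*((a23*b13 + b23*a13) - (a12*b33 + b12*a33)), 4*((a33*a11 - b33*b11) - (a13*a13 - b13*b13)), -4*((a33*b11 + b33*a11) - (a13*b13 + b13*a13)), 4*((a13*a12 - b13*b12) - (a11*a23 - b11*b23)), -4*((a13*b12 + b13*a12) - (a11*b23 + b11*a23));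
    -4*((a23*b13 + b23*a13) - (a12*b33 + b12*a33)), -4*((a23*a13 - b23*b13) - (a12*a33 - b12*b33)), -4*((a33*b11 + b33*a11) - (a13*b13 + b13*a13)), -4*((a33*a11 - b33*b11) - (a13*a13 - b13*b13)), -4*((a13*b12 + b13*a12) - (a11*b23 + b11*a23)), -4*((a13*a12 - b13*b12) - (a11*a23 - b11*b23));
    4*((a12*a23 - b12*b23) - (a22*a13 - b22*b13)), -4*((a12*b23 + b12*a23) - (a22*b13 + b22*a13)), 4*((a13*a12 - b13*b12) - (a23*a11 - b23*b11)), -4*((a13*b12 + b13*a12) - (a23*b11 + b23*a11)), 4*((a11*a22 - b11*b22) - (a12*a12 - b12*b12)), -4*((a11*b22 + b11*a22) - (a12*b12 + b12*a12));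
    -4*((a12*b23 + b12*a23) - (a22*b13 + b22*a13)), -4*((a12*a23 - b12*b23) - (a22*a13 - b22*b13)), -4*((a13*b12 + b13*a12) - (a23*b11 + b23*a11)), -4*((a13*a12 - b13*b12) - (a23*a11 - b23*b11)), -4*((a11*b22 + b11*a22) - (a12*b12 + b12*a12)), -4*((a11*a22 - b11*b22) - (a12*a12 - b12*b12))]

lemma circ_mk (a11 a12 a13 a22 a23 a33 b11 b12 b13 b22 b23 b33 : ℝ) : circ6 (mkS a11 a12 a13 a22 a23 a33 b11 b12 b13 b22 b23 b33) (mkS a11 a12 a13 a22 a23 a33 b11 b12 b13 b22 b23 b33) = mkC a11 a12 a13 a22 a23 a33 b11 b12 b13 b22 b23 b33 := by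
  ext i j
  rw [circ6_eq]
  fin_cases i <;> fin_cases j <;>
    simp only [Fin.zero_eta, Fin.mk_one, Fin.reduceFinMk, rho_sum0, rho_sum1, rho_sum2, rho_sum3, rho_sum4, rho_sum5] <;>
    simp [mkS, mkC] <;> ring

lemma trS_mk (a11 a12 a13 a22 a23 a33 b11 b12 b13 b22 b23 b33 : ℝ) : (mkS a11 a12 a13 a22 a23 a33 b11 b12 b13 b22 b23 b33 * mkS a11 a12 a13 a22 a23 a33 b11 b12 b13 b22 b23 b33).trace = 2 * (1*(a11^2) + 2*(a12^2) + 2*(a13^2) + 1*(a22^2) + 2*(a23^2) + 1*(a33^2) + 1*(b11^2) + 2*(b12^2) + 2*(b13^2) + 1*(b22^2) + 2*(b23^2) + 1*(b33^2)) := by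
  simp [Matrix.trace, Matrix.mul_apply, Fin.sum_univ_six, mkS]
  ring

lemma trJ_mk (a11 a12 a13 a22 a23 a33 b11 b12 b13 b22 b23 b33 p12 p13 p23 q11 q12 q13 q22 q23 q33 : ℝ) : (J6 * mkA a11 a12 a13 a22 a23 a33 b11 b12 b13 b22 b23 b33 p12 p13 p23 q11 q12 q13 q22 q23 q33).trace = -2 * (q11 + q22 + q33) := by
  simp [Matrix.trace, Matrix.mul_apply, Fin.sum_univ_six, mkA, J6]
  ring

lemma dotA_mk (a11 a12 a13 a22 a23 a33 b11 b12 b13 b22 b23 b33 p12 p13 p23 q11 q12 q13 q22 q23 q33 : ℝ) : mdot (mkA a11 a12 a13 a22 a23 a33 b11 b12 b13 b22 b23 b33 p12 p13 p23 q11 q12 q13 q22 q23 q33) (mkA a11 a12 a13 a22 a23 a33 b11 b12 b13 b22 b23 b33 p12 p13 p23 q11 q12 q13 q22 q23 q33) = 2 * (1*(a11^2) + 2*(a12^2) + 2*(a13^2) + 1*(a22^2) + 2*(a23^2) + 1*(a33^2) + 1*(b11^2) + 2*(b12^2) + 2*(b13^2) + 1*(b22^2) + 2*(b23^2) + 1*(b33^2))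 + 2 * (1*(q11^2) + 2*(q12^2) + 2*(q13^2) + 1*(q22^2) + 2*(q23^2) + 1*(q33^2) + 2*p12^2 + 2*p13^2 + 2*p23^2) := by
  simp only [mdot, Matrix.trace, Matrix.diag, Matrix.mul_apply, Matrix.transpose_apply, Fin.sum_univ_six]
  simp [mkA]
  ring

set_option maxHeartbeats 4000000 in
lemma cross_mk (a11 a12 a13 a22 a23 a33 b11 b12 b13 b22 b23 b33 p12 p13 p23 q11 q12 q13 q22 q23 q33 : ℝ) : mdot (mkC a11 a12 a13 a22 a23 a33 b11 b12 b13 b22 b23 b33) (mcomm (mkA a11 a12 a13 a22 a23 a33 b11 b12 b13 b22 b23 b33 p12 p13 p23 q11 q12 q13 q22 q23 q33) (mkA a11 a12 a13 a22 a23 a33 b11 b12 b13 b22 b23 b33 p12 p13 p23 q11 q12 q13 q22 q23 q33)ᵀ) =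
    -32 * (q11 + q22 + q33) * ((((a11*((a22*b33 + b22*a33) - (a23*b23 + b23*a23)) + b11*((a22*a33 - b22*b33) - (a23*a23 - b23*b23))) + (a12*((a23*b13 + b23*a13) - (a12*b33 + b12*a33)) + b12*((a23*a13 - b23*b13) - (a12*a33 - b12*b33)))) + (a13*((a12*b23 + b12*a23) - (a22*b13 + b22*a13)) + b13*((a12*a23 - b12*b23) - (a22*a13 - b22*b13))))) := by
  simp only [mdot, mcomm, Matrix.trace, Matrix.diag, Matrix.mul_apply, Matrix.sub_apply, Matrix.transpose_apply, Fin.sum_univ_six]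
  simp [mkA, mkC]
  ring

lemma mdot_self_nonneg (X : M6) : 0 ≤ mdot X X := by
  simp only [mdot, Matrix.trace, Matrix.diag, Matrix.mul_apply, Matrix.transpose_apply]
  exact Finset.sum_nonneg fun i _ => Finset.sum_nonneg fun j _ => mul_self_nonneg _

lemma mdot_self_pos (X : M6) (h : X ≠ 0) : 0 < mdot X X := by
  refine lt_of_le_of_ne (mdot_self_nonneg X) fun h0 => h ?_
  simp only [mdot, Matrix.trace, Matrix.diag, Matrix.mul_apply, Matrix.transpose_apply] at h0
  have h1 := (Finset.sum_eq_zero_iff_of_nonneg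
    (fun i _ => Finset.sum_nonneg fun j _ => mul_self_nonneg (X i j))).1 h0.symm
  ext i j
  have h2 := (Finset.sum_eq_zero_iff_of_nonneg (fun j _ => mul_self_nonneg (X i j))).1
    (h1 i (Finset.mem_univ _)) j (Finset.mem_univ _)
  simpa using h2

lemma amgm (x y z : ℝ) (hx : 0 ≤ x) (hy : 0 ≤ y) (hz : 0 ≤ z) : 27 * (x * y * z) ≤ (x + y + z)^3 := by
  nlinarith [mul_nonneg hx (sq_nonneg (y - z)), mul_nonneg hy (sq_nonneg (x - z)), mul_nonneg hz (sq_nonneg (x - y)),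
    mul_nonneg (add_nonneg (add_nonneg hx hy) hz) (add_nonneg (add_nonneg (sq_nonneg (x - y)) (sq_nonneg (y - z))) (sq_nonneg (x - z)))]

lemma cs6 (x1 x2 x3 x4 x5 x6 y1 y2 y3 y4 y5 y6 : ℝ) :
    (x1*y1 + x2*y2 + x3*y3 + x4*y4 + x5*y5 + x6*y6)^2 ≤
    (x1^2+x2^2+x3^2+x4^2+x5^2+x6^2) * (y1^2+y2^2+y3^2+y4^2+y5^2+y6^2) := by
  simpa [Fin.sum_univ_six] using Finset.sum_mul_sq_le_sq_mul_sq Finset.univ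
    ![x1,x2,x3,x4,x5,x6] ![y1,y2,y3,y4,y5,y6]


lemma det_bound (a11 a12 a13 a22 a23 a33 b11 b12 b13 b22 b23 b33 : ℝ) : 27 * ((((a11*((a22*b33 + b22*a33) - (a23*b23 + b23*a23)) + b11*((a22*a33 - b22*b33) - (a23*a23 - b23*b23))) + (a12*((a23*b13 + b23*a13) - (a12*b33 + b12*a33)) + b12*((a23*a13 - b23*b13) - (a12*a33 - b12*b33)))) + (a13*((a12*b23 + b12*a23) - (a22*b13 + b22*a13)) + b13*((a12*a23 - b12*b23) - (a22*a13 - b22*b13)))))^2 ≤ (1*(a11^2) + 2*(a12^2) + 2*(a13^2) + 1*(a22^2) + 2*(a23^2) + 1*(a33^2) + 1*(b11^2) + 2*(b12^2) + 2*(b13^2) + 1*(b22^2) + 2*(b23^2) + 1*(b33^2))^3 := by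
  have h1 := cs6 a11 a12 a13 b11 b12 b13 ((a22*b33 + b22*a33) - (a23*b23 + b23*a23)) ((a23*b13 + b23*a13) - (a12*b33 + b12*a33)) ((a12*b23 + b12*a23) - (a22*b13 + b22*a13)) ((a22*a33 - b22*b33) - (a23*a23 - b23*b23)) ((a23*a13 - b23*b13) - (a12*a33 - b12*b33)) ((a12*a23 - b12*b23) - (a22*a13 - b22*b13))
  have h2 : ((a22*b33 + b22*a33) - (a23*b23 + b23*a23))^2+((a23*b13 + b23*a13) - (a12*b33 + b12*a33))^2+((a12*b23 + b12*a23) - (a22*b13 + b22*a13))^2+((a22*a33 - b22*b33) - (a23*a23 - b23*b23))^2+((a23*a13 - b23*b13) - (a12*a33 - b12*b33))^2+((a12*a23 - b12*b23) - (a22*a13 - b22*b13))^2 ≤ (a12^2 + a22^2 + a23^2 + b12^2 + b22^2 + b23^2) * (a13^2 + a23^2 + a33^2 + b13^2 + b23^2 + b33^2) := by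
    have : (a12^2 + a22^2 + a23^2 + b12^2 + b22^2 + b23^2) * (a13^2 + a23^2 + a33^2 + b13^2 + b23^2 + b33^2) - (((a22*b33 + b22*a33) - (a23*b23 + b23*a23))^2+((a23*b13 + b23*a13) - (a12*b33 + b12*a33))^2+((a12*b23 + b12*a23) - (a22*b13 + b22*a13))^2+((a22*a33 - b22*b33) - (a23*a23 - b23*b23))^2+((a23*a13 - b23*b13) - (a12*a33 - b12*b33))^2+((a12*a23 - b12*b23) - (a22*a13 - b22*b13))^2) = (((a12*a13 - b12*(-b13)) + (a22*a23 - b22*(-b23))) + (a23*a33 - b23*(-b33)))^2 + (((a12*(-b13) + b12*a13) + (a22*(-b23) + b22*a23)) + (a23*(-b33) + b23*a33))^2 := by ring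
    rw [← sub_nonneg, this]
    exact add_nonneg (sq_nonneg _) (sq_nonneg _)
  have h3 := amgm (a11^2 + a12^2 + a13^2 + b11^2 + b12^2 + b13^2) (a12^2 + a22^2 + a23^2 + b12^2 + b22^2 + b23^2) (a13^2 + a23^2 + a33^2 + b13^2 + b23^2 + b33^2) (by positivity) (by positivity) (by positivity)
  have h4 := mul_le_mul_of_nonneg_left h2 (show 0 ≤ (a11^2 + a12^2 + a13^2 + b11^2 + b12^2 + b13^2) by positivity)
  have e1 : (((a11*((a22*b33 + b22*a33) - (a23*b23 + b23*a23)) + b11*((a22*a33 - b22*b33) - (a23*a23 - b23*b23))) + (a12*((a23*b13 + b23*a13) - (a12*b33 + b12*a33)) + b12*((a23*a13 - b23*b13) - (a12*a33 - b12*b33)))) + (a13*((a12*b23 + b12*a23) - (a22*b13 + b22*a13)) + b13*((a12*a23 - b12*b23) - (a22*a13 - b22*b13)))) = a11*((a22*b33 + b22*a33) - (a23*b23 + b23*a23)) + a12*((a23*b13 + b23*a13) - (a12*b33 + b12*a33)) + a13*((a12*b23 + b12*a23) - (a22*b13 + b22*a13)) + b11*((a22*a33 - b22*b33) - (a23*a23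 - b23*b23)) + b12*((a23*a13 - b23*b13) - (a12*a33 - b12*b33)) + b13*((a12*a23 - b12*b23) - (a22*a13 - b22*b13)) := by ring
  have e2 : 1*(a11^2) + 2*(a12^2) + 2*(a13^2) + 1*(a22^2) + 2*(a23^2) + 1*(a33^2) + 1*(b11^2) + 2*(b12^2) + 2*(b13^2) + 1*(b22^2) + 2*(b23^2) + 1*(b33^2) = (a11^2 + a12^2 + a13^2 + b11^2 + b12^2 + b13^2) + (a12^2 + a22^2 + a23^2 + b12^2 + b22^2 + b23^2) + (a13^2 + a23^2 + a33^2 + b13^2 + b23^2 + b33^2) := by ring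
  rw [e1, e2]
  linarith

lemma le_of_sq_le_sq_aux (x y : ℝ) (hy : 0 ≤ y) (h : x^2 ≤ y^2) : x ≤ y :=
  (abs_le.1 (abs_le_of_sq_le_sq h hy)).2

lemma final_ineq (s t k D : ℝ) (hs : 0 ≤ s) (hk : t^2 ≤ 3 * k) (hD : 27 * D^2 ≤ s^3) :
    32 * t * D ≤ 4 * s^2 + 16/3 * s * t^2 ∧
    (4 * s^2 + 16/3 * s * t^2 + 4 * t^2 * k) ≤ (2*s + 2*t^2) * (2*s + 2*k) := by
  constructor
  · apply le_of_sq_le_sq_aux _ _ (by positivity)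
    nlinarith [mul_le_mul_of_nonneg_left hD (sq_nonneg t), sq_nonneg (4*s^2 - 16/3*s*t^2), mul_nonneg (pow_nonneg hs 3) (sq_nonneg t)]
  · nlinarith

lemma k_bound (p12 p13 p23 q11 q12 q13 q22 q23 q33 : ℝ) : (q11 + q22 + q33)^2 ≤ 3 * (1*(q11^2) + 2*(q12^2) + 2*(q13^2) + 1*(q22^2) + 2*(q23^2) + 1*(q33^2) + 2*p12^2 + 2*p13^2 + 2*p23^2) := by
  linarith [sq_nonneg (q11 - q22), sq_nonneg (q11 - q33), sq_nonneg (q22 - q33), sq_nonneg q12, sq_nonneg q13,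
      sq_nonneg q23, sq_nonneg p12, sq_nonneg p13, sq_nonneg p23]

lemma final_strict (s t k D m : ℝ) (hs : 0 < s) (hk : t^2 ≤ 3 * k) (hD : 27 * D^2 ≤ s^3) (hm : 0 ≤ m) :
    ¬ (-2 * 0 * (2 * s + 2 * k) = (2*s + 2*t^2) * (2 * s + 2 * k) + m - 32 * t * D) := by
  intro h
  have h1 : 32 * t * D ≤ 3 * s^2 + 16/3 * s * t^2 := by
    apply le_of_sq_le_sq_aux _ _ (by positivity)
    nlinarith [mul_le_mul_of_nonneg_left hD (sq_nonneg t), sq_nonneg (3*s^2 - 16/3*s*t^2), mul_nonneg (pow_nonneg hs.le 3) (sq_nonneg t)]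
  have h2 := (final_ineq s t k D hs.le hk hD).2
  have h3 : 0 ≤ k := by nlinarith [sq_nonneg t]
  have h4 : 0 ≤ t^2 * k := by positivity
  have h5 : 0 < s^2 := by positivity
  nlinarith

set_option maxHeartbeats 2000000 in
theorem soliton_expanding (A : M6) (hA : inSp A) (hA0 : A ≠ 0) (c : ℝ)
    (hc : c = -(1/2) * ((symPart A * symPart A).trace + (1/2) * ((J6 * A).trace)^2
      + (mdot (mcomm A Aᵀ) (mcomm A Aᵀ)
          + mdot (circ6 (symPart A) (symPart A)) (mcomm A Aᵀ)) / mdot A A)) :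
    c ≤ 0 ∧ (c = 0 → Aᵀ = -A ∧ (J6 * A).trace = 0 ∧ mcomm J6 A = 0) := by
  have hpos := mdot_self_pos A hA0
  have hMM := mdot_self_nonneg (mcomm A Aᵀ)
  obtain ⟨a11, a12, a13, a22, a23, a33, b11, b12, b13, b22, b23, b33, p12, p13, p23, q11, q12, q13, q22, q23, q33, rfl⟩ := exists_mk A hA
  rw [symPart_mk, circ_mk, trS_mk, trJ_mk, cross_mk] at hc
  rw [trJ_mk]
  have hdot := dotA_mk a11 a12 a13 a22 a23 a33 b11 b12 b13 b22 b23 b33 p12 p13 p23 q11 q12 q13 q22 q23 q33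
  have hb := det_bound a11 a12 a13 a22 a23 a33 b11 b12 b13 b22 b23 b33
  have hs : 0 ≤ 1*(a11^2) + 2*(a12^2) + 2*(a13^2) + 1*(a22^2) + 2*(a23^2) + 1*(a33^2) + 1*(b11^2) + 2*(b12^2) + 2*(b13^2) + 1*(b22^2) + 2*(b23^2) + 1*(b33^2) := by positivity
  have hs0 : 1*(a11^2) + 2*(a12^2) + 2*(a13^2) + 1*(a22^2) + 2*(a23^2) + 1*(a33^2) + 1*(b11^2) + 2*(b12^2) + 2*(b13^2) + 1*(b22^2) + 2*(b23^2) + 1*(b33^2) = 0 → mkS a11 a12 a13 a22 a23 a33 b11 b12 b13 b22 b23 b33 = 0 := by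
    intro h
    have hz := trS_mk a11 a12 a13 a22 a23 a33 b11 b12 b13 b22 b23 b33
    rw [h, mul_zero] at hz
    by_contra hne
    have h1 := mdot_self_pos _ hne
    have h2 : (mkS a11 a12 a13 a22 a23 a33 b11 b12 b13 b22 b23 b33)ᵀ = mkS a11 a12 a13 a22 a23 a33 b11 b12 b13 b22 b23 b33 := by
      ext i j
      fin_cases i <;> fin_cases j <;> simp [mkS]
    rw [mdot, h2, hz] at h1
    exact lt_irrefl _ h1
  have hk := k_bound p12 p13 p23 q11 q12 q13 q22 q23 q33
  have hsym := symPart_mk a11 a12 a13 a22 a23 a33 b11 b12 b13 b22 b23 b33 p12 p13 p23 q11 q12 q13 q22 q23 q33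
  generalize mkA a11 a12 a13 a22 a23 a33 b11 b12 b13 b22 b23 b33 p12 p13 p23 q11 q12 q13 q22 q23 q33 = A at *
  generalize mkS a11 a12 a13 a22 a23 a33 b11 b12 b13 b22 b23 b33 = S at *
  generalize 1*(a11^2) + 2*(a12^2) + 2*(a13^2) + 1*(a22^2) + 2*(a23^2) + 1*(a33^2) + 1*(b11^2) + 2*(b12^2) + 2*(b13^2) + 1*(b22^2) + 2*(b23^2) + 1*(b33^2) = s at *
  generalize 1*(q11^2) + 2*(q12^2) + 2*(q13^2) + 1*(q22^2) + 2*(q23^2) + 1*(q33^2) + 2*p12^2 + 2*p13^2 + 2*p23^2 = k at *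
  generalize (((a11*((a22*b33 + b22*a33) - (a23*b23 + b23*a23)) + b11*((a22*a33 - b22*b33) - (a23*a23 - b23*b23))) + (a12*((a23*b13 + b23*a13) - (a12*b33 + b12*a33)) + b12*((a23*a13 - b23*b13) - (a12*a33 - b12*b33)))) + (a13*((a12*b23 + b12*a23) - (a22*b13 + b22*a13)) + b13*((a12*a23 - b12*b23) - (a22*a13 - b22*b13)))) = D at *
  generalize q11 + q22 + q33 = t at *
  generalize mdot (mcomm A Aᵀ) (mcomm A Aᵀ) = m at *
  obtain ⟨f1, f2⟩ := final_ineq s t k D hs hk hb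
  have hk0 : 0 ≤ k := by nlinarith [sq_nonneg t]
  generalize hd : mdot A A = d at *
  have hc' : -2 * c * d = (2*s + 2*t^2) * d + m - 32 * t * D := by
    rw [hc]; field_simp; ring
  have htk : 0 ≤ t^2 * k := by positivity
  rw [hdot] at hc'
  constructor
  · by_contra hcon
    push Not at hcon
    have : 0 < c * d := mul_pos hcon hpos
    rw [hdot] at this
    nlinarith
  · intro h0
    rw [h0] at hc'
    have g1 : 4 * (t^2 * k) = 0 := by nlinarith
    have g2 : s = 0 := by
      by_contra hne
      have hsp : 0 < s := lt_of_le_of_ne hs (Ne.symm hne)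
      exact absurd hc' (final_strict s t k D m hsp hk hb hMM)
    have hkp : 0 < k := by rw [g2] at hdot; linarith
    have ht : t = 0 := by
      have : t^2 = 0 := by
        rcases mul_eq_zero.1 (show t^2 * k = 0 by linarith) with h | h
        · exact h
        · exact absurd h hkp.ne'
      simpa using this
    have hT : Aᵀ = -A := by
      have := hsym
      rw [hs0 g2, symPart] at this
      have h2 : A + Aᵀ = 0 := (smul_eq_zero.1 this).resolve_left (by norm_num)
      exact (neg_eq_of_add_eq_zero_right h2).symm
    refine ⟨hT, by rw [ht]; simp, ?_⟩
    have h3 := hA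
    rw [inSp, hT, Matrix.mul_neg, ← sub_eq_add_neg] at h3
    rw [mcomm, ← neg_sub, h3, neg_zero]
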